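/- Let β = r/s be a rational number with r > s > 0 and gcd(r, s) = 1, and let F, G ∈ ℝ[X, Y] be β-quasihomogeneous polynomials of degree d ≥ 1 with height functions f₊, f₋ and g₊, g₋ respectively. Let e denote the common multiplicity of X as a factor of F and of G, and suppose e < d. Suppose there exist nonzero real numbers λ₁, λ₂ with λ₁λ₂ > 0 and bi-Lipschitz homeomorphisms φ₁, φ₂ : ℝ → ℝ such that: if λ₁ > 0 and λ₂ > 0 then |λ₁|^d·(g₊ ∘ φ₁) = f₊ and |λ₂|^d·(g₋ ∘ φ₂) = f₋, while if λ₁ < 0 and λ₂ < 0 then |λ₁|^d·(g₋ ∘ φ₁) = f₊ and |λ₂|^d·(g₊ ∘ φ₂) = f₋. If L₁, L₂ are real numbers with φᵢ(t)/t → Lᵢ as |t| → +∞ (i = 1, 2), then |λ₁|^{dβ/(d−e)}·|L₁| = |λ₂|^{dβ/(d−e)}·|L₂|. -/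

import Mathlib

open Filter Topology

/-- Evaluation of a polynomial in two variables at the point `(x, y)`. -/
noncomputable def eval2 (F : MvPolynomial (Fin 2) ℝ) (x y : ℝ) : ℝ :=
  MvPolynomial.eval ![x, y] F

lemma aux_cont (P : MvPolynomial (Fin 2) ℝ) (y : ℝ) : Continuous fun x => eval2 P x y := by
  unfold eval2
  have h : Continuous fun x : ℝ => (![x, y] : Fin 2 → ℝ) := by
    refine continuous_pi fun i => ?_
    fin_cases i
    · exact continuous_id
    · simpa using continuous_const
  exact (MvPolynomial.continuous_eval P).comp h

lemma aux_dvd (P : MvPolynomial (Fin 2) ℝ) (h : ∀ y, eval2 P 0 y = 0) :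
    (MvPolynomial.X 0 : MvPolynomial (Fin 2) ℝ) ∣ P := by
  have h0 : (MvPolynomial.finSuccEquiv ℝ 1 P).coeff 0 = 0 := by
    apply MvPolynomial.funext
    intro v
    have h1 := MvPolynomial.eval_eq_eval_mv_eval' v (0 : ℝ) P
    have h2 : (Fin.cons 0 v : Fin 2 → ℝ) = ![0, v 0] := by
      ext i; fin_cases i <;> rfl
    have h3 := h (v 0)
    unfold eval2 at h3
    rw [h2, h3, ← Polynomial.coeff_zero_eq_eval_zero, Polynomial.coeff_map] at h1
    rw [map_zero]
    exact h1.symm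
  obtain ⟨Q, hQ⟩ := Polynomial.X_dvd_iff.2 h0
  refine ⟨(MvPolynomial.finSuccEquiv ℝ 1).symm Q, ?_⟩
  apply (MvPolynomial.finSuccEquiv ℝ 1).injective
  rw [map_mul, AlgEquiv.apply_symm_apply, hQ, MvPolynomial.finSuccEquiv_X_zero]

lemma aux_key (d e : ℕ) (hed : e < d) (β : ℝ) (hβ : 0 < β)
    (F : MvPolynomial (Fin 2) ℝ)
    (hF : ∀ t x y : ℝ, 0 < t → eval2 F (t * x) (t ^ β * y) = t ^ d * eval2 F x y)
    (heF : (MvPolynomial.X 0 : MvPolynomial (Fin 2) ℝ) ^ e ∣ F ∧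
      ¬ (MvPolynomial.X 0 : MvPolynomial (Fin 2) ℝ) ^ (e + 1) ∣ F) :
    ∃ c : ℝ, 0 < c ∧ ∀ σ : ℝ, |σ| = 1 →
      Tendsto (fun t => |eval2 F σ t| / |t| ^ (((d : ℝ) - e) / β)) (cocompact ℝ) (𝓝 c) := by
  obtain ⟨⟨P, hP⟩, hnd⟩ := heF
  have hFP : ∀ x y, eval2 F x y = x ^ e * eval2 P x y := by
    intro x y
    simp [eval2, hP]
  have hPh : ∀ t x y : ℝ, 0 < t → eval2 P (t * x) (t ^ β * y) = t ^ (d - e) * eval2 P x y := by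
    intro t x y ht
    have hc1 : Continuous fun x => eval2 P (t * x) (t ^ β * y) :=
      (aux_cont P _).comp (continuous_const.mul continuous_id)
    have hc2 : Continuous fun x => t ^ (d - e) * eval2 P x y :=
      continuous_const.mul (aux_cont P _)
    refine congrFun (hc1.ext_on (dense_compl_singleton (0 : ℝ)) hc2 ?_) x
    intro x hx
    have hx : x ≠ 0 := hx
    have := hF t x y ht
    rw [hFP, hFP] at this
    have hd : t ^ d = t ^ e * t ^ (d - e) := by rw [← pow_add]; congr 1; omega
    have hne : (t * x) ^ e ≠ 0 := by positivity
    apply mul_left_cancel₀ hne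
    rw [this, hd]; ring
  let q : Polynomial ℝ := MvPolynomial.aeval ![0, Polynomial.X] P
  have hq : ∀ y, q.eval y = eval2 P 0 y := by
    intro y
    have : ((Polynomial.aeval y : Polynomial ℝ →ₐ[ℝ] ℝ).comp
        (MvPolynomial.aeval ![0, Polynomial.X])) =
        (MvPolynomial.aeval ![0, y] : MvPolynomial (Fin 2) ℝ →ₐ[ℝ] ℝ) := by
      apply MvPolynomial.algHom_ext
      intro i
      fin_cases i <;> simp
    have h2 := DFunLike.congr_fun this P
    simpa [q, eval2, MvPolynomial.aeval_eq_eval, Polynomial.aeval_def] using h2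
  have hq0 : q ≠ 0 := by
    intro h
    obtain ⟨Q, hQ⟩ := aux_dvd P (fun y => by rw [← hq, h, Polynomial.eval_zero])
    exact hnd ⟨Q, by rw [hP, hQ]; ring⟩
  have hcomp : q.comp (Polynomial.C ((2:ℝ) ^ β) * Polynomial.X) =
      Polynomial.C ((2:ℝ) ^ (d - e)) * q := by
    apply Polynomial.funext
    intro y
    have := hPh 2 0 y (by norm_num)
    rw [mul_zero] at this
    simp [hq, this]
  have hcoef : ∀ j, q.coeff j ≠ 0 → β * j = (d : ℝ) - e := by
    intro j hj
    have h := congrArg (fun p => Polynomial.coeff p j) hcomp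
    simp only [Polynomial.comp_C_mul_X_coeff, Polynomial.coeff_C_mul] at h
    rw [mul_comm] at h
    have h := mul_right_cancel₀ hj h
    rw [← Real.rpow_natCast, ← Real.rpow_mul (by norm_num), ← Real.rpow_natCast,
      Nat.cast_sub hed.le] at h
    exact (Real.rpow_right_inj (by norm_num) (by norm_num)).1 h
  have hlc : q.leadingCoeff ≠ 0 := Polynomial.leadingCoeff_ne_zero.2 hq0
  have hmon : q = Polynomial.C q.leadingCoeff * Polynomial.X ^ q.natDegree := by
    ext j
    rw [Polynomial.coeff_C_mul_X_pow]
    split_ifs with hj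
    · rw [hj]; rfl
    · by_contra hne
      have h1 := hcoef j hne
      have h2 := hcoef q.natDegree hlc
      apply hj
      have : (j : ℝ) = q.natDegree := mul_left_cancel₀ hβ.ne' (h1.trans h2.symm)
      exact_mod_cast this
  have hq1 : ∀ y, |y| = 1 → |eval2 P 0 y| = |q.leadingCoeff| := by
    intro y hy
    rw [← hq, hmon]
    simp [abs_mul, abs_pow, hy]
  refine ⟨|q.leadingCoeff|, abs_pos.2 hlc, fun σ hσ => ?_⟩
  have hform : ∀ t : ℝ, t ≠ 0 → |eval2 F σ t| / |t| ^ (((d : ℝ) - e) / β) =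
      |eval2 P (|t| ^ (-(1 / β)) * σ) (|t|⁻¹ * t)| := by
    intro t ht
    have ht' : 0 < |t| := abs_pos.2 ht
    have hu : 0 < |t| ^ (-(1 / β)) := by positivity
    have h := hPh (|t| ^ (-(1 / β))) σ t hu
    have h1 : (|t| ^ (-(1 / β))) ^ β = |t|⁻¹ := by
      rw [← Real.rpow_mul ht'.le, ← Real.rpow_neg_one]
      congr 1; field_simp
    have h2 : (|t| ^ (-(1 / β))) ^ (d - e) = (|t| ^ (((d : ℝ) - e) / β))⁻¹ := by
      rw [← Real.rpow_natCast, ← Real.rpow_mul ht'.le, ← Real.rpow_neg ht'.le,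
        Nat.cast_sub hed.le]
      congr 1; field_simp
    rw [h1, h2] at h
    rw [h, hFP, abs_mul, abs_mul, abs_pow, hσ, one_pow, one_mul, abs_inv,
      abs_of_pos (by positivity : 0 < |t| ^ (((d : ℝ) - e) / β)), div_eq_inv_mul]
  have hlim : Tendsto (fun t : ℝ => |t| ^ (-(1 / β)) * σ) (cocompact ℝ) (𝓝 0) := by
    have h1 : Tendsto (fun t : ℝ => |t|) (cocompact ℝ) atTop := by
      exact tendsto_norm_cocompact_atTop (E := ℝ)
    have h2 := ((tendsto_rpow_neg_atTop (by positivity : 0 < 1 / β)).comp h1).mul_const σ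
    simpa using h2
  have hy : ∀ y, |y| = 1 → Tendsto (fun t : ℝ => |eval2 P (|t| ^ (-(1 / β)) * σ) y|)
      (cocompact ℝ) (𝓝 |q.leadingCoeff|) := by
    intro y hy
    rw [← hq1 y hy]
    exact (((aux_cont P y).tendsto 0).comp hlim).abs
  rw [cocompact_eq_atBot_atTop] at hy ⊢
  refine Tendsto.sup ?_ ?_
  · refine ((hy (-1) (by simp)).mono_left le_sup_left).congr' ?_
    filter_upwards [eventually_lt_atBot 0] with t ht
    rw [hform t ht.ne, abs_of_neg ht]
    congr 2
    rw [inv_neg, neg_mul, inv_mul_cancel₀ ht.ne]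
  · refine ((hy 1 (by simp)).mono_left le_sup_right).congr' ?_
    filter_upwards [eventually_gt_atTop 0] with t ht
    rw [hform t ht.ne', abs_of_pos ht]
    congr 2
    field_simp

lemma aux_lim (p : ℝ) (hp : 0 < p) (f g φ : ℝ → ℝ) (a b l L : ℝ) (d : ℕ)
    (hf : Tendsto (fun t => |f t| / |t| ^ p) (cocompact ℝ) (𝓝 a))
    (hg : Tendsto (fun t => |g t| / |t| ^ p) (cocompact ℝ) (𝓝 b))
    (hbij : Function.Bijective φ)
    (hinv : ∃ K : NNReal, LipschitzWith K (Function.invFun φ))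
    (h : ∀ t, |l| ^ d * g (φ t) = f t)
    (hL : Tendsto (fun t => φ t / t) atTop (𝓝 L)) :
    |l| ^ d * (b * |L| ^ p) = a := by
  have hφ : Tendsto φ atTop (cocompact ℝ) := by
    obtain ⟨K, hK⟩ := hinv
    have h1 : AntilipschitzWith K φ := by
      apply hK.to_rightInverse
      exact Function.leftInverse_invFun hbij.1
    have h2 := h1.tendsto_cobounded
    rw [Metric.cobounded_eq_cocompact] at h2
    exact h2.mono_left atTop_le_cocompact
  have h1 := (hg.comp hφ).mul ((Real.continuousAt_rpow_const |L| p (Or.inr hp.le)).tendsto.comp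
    hL.abs)
  have h2 := h1.const_mul (|l| ^ d)
  refine tendsto_nhds_unique h2 ((hf.mono_left atTop_le_cocompact).congr' ?_)
  have hne : ∀ᶠ t in atTop, φ t ≠ 0 := by
    have := hφ (isCompact_singleton (x := (0 : ℝ))).compl_mem_cocompact
    filter_upwards [this] with t ht using ht
  filter_upwards [hne, eventually_gt_atTop 0] with t h0 ht
  have e1 : 0 < |φ t| ^ p := Real.rpow_pos_of_pos (abs_pos.2 h0) p
  have e2 : 0 < |t| ^ p := Real.rpow_pos_of_pos (abs_pos.2 ht.ne') p
  simp only [Function.comp]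
  rw [← h t, abs_mul, abs_pow, abs_abs, abs_div, Real.div_rpow (abs_nonneg _) (abs_nonneg _)]
  field_simp

/-- If the height functions of two β-quasihomogeneous polynomials `F, G` of degree
`d ≥ 1`, both with multiplicity `e < d` of `X` as a factor, are related by a
proto-transition `(λ, φ)` whose components have limits `φᵢ(t)/t → Lᵢ`, then
`|λ₁|^{dβ/(d−e)}·|L₁| = |λ₂|^{dβ/(d−e)}·|L₂|`. -/
theorem stmt_15 (r s d e : ℕ) (hrs : s < r) (hs : 0 < s) (hgcd : Nat.gcd r s = 1)
    (hd : 1 ≤ d) (hed : e < d) (β : ℝ) (hβ : β = (r : ℝ) / (s : ℝ))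
    (F G : MvPolynomial (Fin 2) ℝ)
    (hF : ∀ t x y : ℝ, 0 < t → eval2 F (t * x) (t ^ β * y) = t ^ d * eval2 F x y)
    (hG : ∀ t x y : ℝ, 0 < t → eval2 G (t * x) (t ^ β * y) = t ^ d * eval2 G x y)
    (heF : (MvPolynomial.X 0 : MvPolynomial (Fin 2) ℝ) ^ e ∣ F ∧
      ¬ (MvPolynomial.X 0 : MvPolynomial (Fin 2) ℝ) ^ (e + 1) ∣ F)
    (heG : (MvPolynomial.X 0 : MvPolynomial (Fin 2) ℝ) ^ e ∣ G ∧
      ¬ (MvPolynomial.X 0 : MvPolynomial (Fin 2) ℝ) ^ (e + 1) ∣ G)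
    (l1 l2 : ℝ) (hl1 : l1 ≠ 0) (hl2 : l2 ≠ 0) (hll : 0 < l1 * l2)
    (φ1 φ2 : ℝ → ℝ)
    (hφ1bij : Function.Bijective φ1) (hφ1lip : ∃ K : NNReal, LipschitzWith K φ1)
    (hφ1inv : ∃ K : NNReal, LipschitzWith K (Function.invFun φ1))
    (hφ2bij : Function.Bijective φ2) (hφ2lip : ∃ K : NNReal, LipschitzWith K φ2)
    (hφ2inv : ∃ K : NNReal, LipschitzWith K (Function.invFun φ2))
    (hpos : 0 < l1 → 0 < l2 →
      (∀ t : ℝ, |l1| ^ d * eval2 G 1 (φ1 t) = eval2 F 1 t) ∧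
      (∀ t : ℝ, |l2| ^ d * eval2 G (-1) (φ2 t) = eval2 F (-1) t))
    (hneg : l1 < 0 → l2 < 0 →
      (∀ t : ℝ, |l1| ^ d * eval2 G (-1) (φ1 t) = eval2 F 1 t) ∧
      (∀ t : ℝ, |l2| ^ d * eval2 G 1 (φ2 t) = eval2 F (-1) t))
    (L1 L2 : ℝ)
    (hL1top : Tendsto (fun t => φ1 t / t) atTop (𝓝 L1))
    (hL1bot : Tendsto (fun t => φ1 t / t) atBot (𝓝 L1))
    (hL2top : Tendsto (fun t => φ2 t / t) atTop (𝓝 L2))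
    (hL2bot : Tendsto (fun t => φ2 t / t) atBot (𝓝 L2)) :
    |l1| ^ ((d : ℝ) * β / ((d : ℝ) - (e : ℝ))) * |L1| =
      |l2| ^ ((d : ℝ) * β / ((d : ℝ) - (e : ℝ))) * |L2| := by
  have hβ0 : 0 < β := by
    rw [hβ]
    have : 0 < r := by omega
    positivity
  have hde : (0 : ℝ) < (d : ℝ) - e := sub_pos.2 (by exact_mod_cast hed)
  have hp : 0 < ((d : ℝ) - e) / β := by positivity
  obtain ⟨a, ha, hFa⟩ := aux_key d e hed β hβ0 F hF heF
  obtain ⟨b, hb, hGb⟩ := aux_key d e hed β hβ0 G hG heG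
  have hs1 : |(1 : ℝ)| = 1 := abs_one
  have hs2 : |(-1 : ℝ)| = 1 := by simp
  have key : |l1| ^ d * (b * |L1| ^ (((d : ℝ) - e) / β)) = a ∧
      |l2| ^ d * (b * |L2| ^ (((d : ℝ) - e) / β)) = a := by
    rcases lt_or_gt_of_ne hl1 with h | h
    · obtain ⟨h1, h2⟩ := hneg h (by nlinarith)
      exact ⟨aux_lim _ hp _ _ φ1 a b l1 L1 d (hFa _ hs1) (hGb _ hs2) hφ1bij hφ1inv h1 hL1top,
        aux_lim _ hp _ _ φ2 a b l2 L2 d (hFa _ hs2) (hGb _ hs1) hφ2bij hφ2inv h2 hL2top⟩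
    · obtain ⟨h1, h2⟩ := hpos h (by nlinarith)
      exact ⟨aux_lim _ hp _ _ φ1 a b l1 L1 d (hFa _ hs1) (hGb _ hs1) hφ1bij hφ1inv h1 hL1top,
        aux_lim _ hp _ _ φ2 a b l2 L2 d (hFa _ hs2) (hGb _ hs2) hφ2bij hφ2inv h2 hL2top⟩
  have hfin : ∀ l L : ℝ, |l| ^ d * (b * |L| ^ (((d : ℝ) - e) / β)) = a →
      |l| ^ ((d : ℝ) * β / ((d : ℝ) - (e : ℝ))) * |L| = (a / b) ^ (β / ((d : ℝ) - e)) := by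
    intro l L h
    have h1 : a / b = |l| ^ d * |L| ^ (((d : ℝ) - e) / β) := by
      rw [← h]; field_simp
    rw [h1, Real.mul_rpow (by positivity) (by positivity), ← Real.rpow_natCast,
      ← Real.rpow_mul (abs_nonneg _), ← Real.rpow_mul (abs_nonneg _)]
    have h2 : ((d : ℝ) - e) / β * (β / ((d : ℝ) - e)) = 1 := by field_simp
    rw [h2, Real.rpow_one, mul_div_assoc]
  rw [hfin _ _ key.1, hfin _ _ key.2]
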